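/- Let t̂(z) = (1/2)(Â(z) + D̂(z)) be half the trace of the N-site reflection monodromy matrix T̂(z). Then t̂(z⁻¹) = t̂(z) and t̂(−z) = −t̂(z), and there exist unique elements P₀, P₁, …, P_N ∈ R (the reflection Hamiltonians) such that 2·t̂(z) = (z + z⁻¹)·(P₀ + Σ_{j=1}^{N} P_j·(z^{2j} + z^{−2j})/2) in R[z,z⁻¹]. -/

import Mathlib

open LaurentPolynomial

noncomputable section

/-- The local Lax matrix `L(u) = [[u k − u⁻¹ k⁻¹, e], [f, u k⁻¹ − u⁻¹ k]]` of the XXZ chain,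
as a 2×2 matrix over the Laurent polynomial ring `R[z,z⁻¹]`; the argument `v` stands for the
inverse `u⁻¹` of the unit `u`. -/
noncomputable def lax {R : Type} [CommRing R] (e f k kinv : R)
    (u v : LaurentPolynomial R) : Matrix (Fin 2) (Fin 2) (LaurentPolynomial R) :=
  !![u * C k - v * C kinv, C e; C f, u * C kinv - v * C k]

/-- The diagonal reflection matrix `K(z) = diag(ξz − ξ⁻¹z⁻¹, ξz⁻¹ − ξ⁻¹z)`, where `v` stands
for `z⁻¹`. -/
noncomputable def refK {R : Type} [CommRing R] [Algebra ℂ R] (ξ : ℂ)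
    (u v : LaurentPolynomial R) : Matrix (Fin 2) (Fin 2) (LaurentPolynomial R) :=
  !![algebraMap ℂ (LaurentPolynomial R) ξ * u - algebraMap ℂ (LaurentPolynomial R) ξ⁻¹ * v, 0;
     0, algebraMap ℂ (LaurentPolynomial R) ξ * v - algebraMap ℂ (LaurentPolynomial R) ξ⁻¹ * u]

/-- The reflection monodromy matrix
`T̂(z) = L₁(a₁z)⋯L_N(a_N z)·K(z)·L_N(z/a_N)⋯L₁(z/a₁)`, evaluated at a general unit `u`
(with `v` standing for `u⁻¹`). -/
noncomputable def thatGen {R : Type} [CommRing R] [Algebra ℂ R] (N : ℕ)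
    (e f k kinv : Fin N → R) (ξ : ℂ) (a : Fin N → ℂ) (u v : LaurentPolynomial R) :
    Matrix (Fin 2) (Fin 2) (LaurentPolynomial R) :=
  (List.ofFn fun i => lax (e i) (f i) (k i) (kinv i)
      (algebraMap ℂ (LaurentPolynomial R) (a i) * u)
      (algebraMap ℂ (LaurentPolynomial R) (a i)⁻¹ * v)).prod
  * refK ξ u v *
  ((List.ofFn fun i => lax (e i) (f i) (k i) (kinv i)
      (algebraMap ℂ (LaurentPolynomial R) (a i)⁻¹ * u)
      (algebraMap ℂ (LaurentPolynomial R) (a i) * v)).reverse).prod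

/-- The reflection monodromy matrix `T̂(z)` at `u = z`. -/
noncomputable def That {R : Type} [CommRing R] [Algebra ℂ R] (N : ℕ)
    (e f k kinv : Fin N → R) (ξ : ℂ) (a : Fin N → ℂ) :
    Matrix (Fin 2) (Fin 2) (LaurentPolynomial R) :=
  thatGen N e f k kinv ξ a (T 1) (T (-1))

/-- `t̂(z) = (1/2)·tr T̂(z)`, the reflection transfer matrix multiplied by `(z−z⁻¹)`. -/
noncomputable def tHat {R : Type} [CommRing R] [Algebra ℂ R] (N : ℕ)
    (e f k kinv : Fin N → R) (ξ : ℂ) (a : Fin N → ℂ) : LaurentPolynomial R :=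
  (2 : ℂ)⁻¹ • (That N e f k kinv ξ a).trace

/-- `Pv : Fin (N+1) → R` is the family of reflection Hamiltonians:
`2·t̂(z) = (z + z⁻¹)·(P₀ + Σ_{j=1}^{N} P_j·(z^{2j} + z^{−2j})/2)`. -/
def IsReflectionHamiltonians {R : Type} [CommRing R] [Algebra ℂ R] (N : ℕ)
    (e f k kinv : Fin N → R) (ξ : ℂ) (a : Fin N → ℂ) (Pv : Fin (N + 1) → R) : Prop :=
  (2 : ℂ) • tHat N e f k kinv ξ a
    = (T 1 + T (-1)) * (C (Pv 0) + ∑ j : Fin N, C (Pv j.succ) *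
        ((2 : ℂ)⁻¹ • (T (2 * (j.1 + 1) : ℤ) + T (-(2 * (j.1 + 1) : ℤ)))))

/-- `t̂(u) = (1/2)·tr T̂(u)` at a general unit `u` (with `v` standing for `u⁻¹`). -/
noncomputable def tHatGen {R : Type} [CommRing R] [Algebra ℂ R] (N : ℕ)
    (e f k kinv : Fin N → R) (ξ : ℂ) (a : Fin N → ℂ) (u v : LaurentPolynomial R) :
    LaurentPolynomial R :=
  (2 : ℂ)⁻¹ • (thatGen N e f k kinv ξ a u v).trace

/-!
The recursion `T̂_{N+1}(z) = L(az) T̂_N(z) L(z/a)` propagates three properties of the diagonal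
matrix `K(z)`. Since `L(u⁻¹) = -adj L(u)`, we get `T̂(z⁻¹) = adj T̂(z)`; since
`L(-u) = -σᶻ L(u) σᶻ`, we get `T̂(-z) = -σᶻ T̂(z) σᶻ`; and each new site raises the degree by at
most `2`. The trace is therefore symmetric, odd and of degree at most `2N + 1`, that is, a
combination of the Laurent cosines `c₁, c₃, …, c_{2N+1}`, where `cₙ = (zⁿ + z⁻ⁿ) / 2`. The product
formula `(z + z⁻¹) c_{2j} = c_{2j+1} + c_{2j-1}` expresses the odd cosines recursively through the
`(z + z⁻¹) c_{2j}`, which gives existence. Uniqueness holds because the cosines are linearly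
independent and `z + z⁻¹` is not a zero divisor.
-/

section LaurentCosines

variable {R : Type*} [CommRing R]

/-- The substitution `z ↦ -z`, as an endomorphism of the `R`-algebra of Laurent polynomials. -/
def negVar (R : Type*) [CommRing R] : R[T;T⁻¹] →ₐ[R] R[T;T⁻¹] :=
  AddMonoidAlgebra.lift R R[T;T⁻¹] ℤ
    { toFun n := n.toAdd.negOnePow • T n.toAdd
      map_one' := by simp
      map_mul' m n := by
        rw [toAdd_mul, Int.negOnePow_add, T_add, smul_mul_smul_comm] }

theorem negVar_T (n : ℤ) : negVar R (T n) = n.negOnePow • T n :=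
  (AddMonoidAlgebra.lift_single _ _ _).trans (one_smul R _)

theorem negVar_T_of_odd {n : ℤ} (hn : Odd n) : negVar R (T n) = -T n := by
  rw [negVar_T, Int.negOnePow_odd n hn, Units.neg_smul, one_smul]

theorem algHom_C (φ : R[T;T⁻¹] →ₐ[R] R[T;T⁻¹]) (r : R) : φ (C r) = C r :=
  φ.commutes r

theorem C_mul_mem {S : Submodule R R[T;T⁻¹]} {p : R[T;T⁻¹]} (hp : p ∈ S) (r : R) : C r * p ∈ S :=
  smul_eq_C_mul r p ▸ S.smul_mem r hp

/-- The Laurent polynomials all of whose exponents lie in `[-d, d]`. -/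
def boundedDegree (R : Type*) [CommRing R] (d : ℤ) : Submodule R R[T;T⁻¹] :=
  Submodule.span R (T '' Set.Icc (-d) d)

theorem T_mem_boundedDegree {n d : ℤ} (hn : n ∈ Set.Icc (-d) d) :
    (T n : R[T;T⁻¹]) ∈ boundedDegree R d :=
  Submodule.subset_span (Set.mem_image_of_mem T hn)

theorem mul_mem_boundedDegree {p q : R[T;T⁻¹]} {c d : ℤ} (hp : p ∈ boundedDegree R c)
    (hq : q ∈ boundedDegree R d) : p * q ∈ boundedDegree R (c + d) := by
  have hpq := Submodule.mul_mem_mul hp hq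
  rw [boundedDegree, boundedDegree, Submodule.span_mul_span] at hpq
  refine Submodule.span_le.2 ?_ hpq
  rintro _ ⟨_, ⟨m, hm, rfl⟩, _, ⟨n, hn, rfl⟩, rfl⟩
  simp only [← T_add]
  exact T_mem_boundedDegree ⟨by linarith [hm.1, hn.1], by linarith [hm.2, hn.2]⟩

theorem matrix_mul_apply_mem_boundedDegree {l m n : Type*} [Fintype m]
    {A : Matrix l m R[T;T⁻¹]} {B : Matrix m n R[T;T⁻¹]} {c d : ℤ}
    (hA : ∀ i j, A i j ∈ boundedDegree R c) (hB : ∀ i j, B i j ∈ boundedDegree R d) (i : l)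
    (j : n) : (A * B) i j ∈ boundedDegree R (c + d) :=
  Submodule.sum_mem _ fun k _ => mul_mem_boundedDegree (hA i k) (hB k j)

theorem T_one_add_T_neg_one_mem_nonZeroDivisors :
    (T 1 + T (-1) : R[T;T⁻¹]) ∈ nonZeroDivisors R[T;T⁻¹] := by
  have hmonic : (Polynomial.X ^ 2 + Polynomial.C 1 : Polynomial R).Monic :=
    Polynomial.monic_X_pow_add_C 1 two_ne_zero
  have hfactor : (T 1 + T (-1) : R[T;T⁻¹]) =
      T (-1) * algebraMap (Polynomial R) R[T;T⁻¹] (Polynomial.X ^ 2 + Polynomial.C 1) := by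
    rw [algebraMap_eq_toLaurent, map_add, map_one, map_one, Polynomial.toLaurent_X_pow, mul_add,
      ← T_add, mul_one]
    rfl
  rw [hfactor]
  exact mul_mem (isUnit_T (-1)).mem_nonZeroDivisors
    (IsLocalization.map_nonZeroDivisors_le (.powers Polynomial.X) R[T;T⁻¹]
      (Submonoid.mem_map_of_mem _ hmonic.mem_nonZeroDivisors))

variable [Invertible (2 : R)]

/-- The Laurent polynomial `(zⁿ + z⁻ⁿ) / 2`, which is `cos (n θ)` at `z = exp (i θ)`. -/
def laurentCos (R : Type*) [CommRing R] [Invertible (2 : R)] (n : ℤ) : R[T;T⁻¹] :=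
  ⅟(2 : R) • (T n + T (-n))

theorem laurentCos_zero : laurentCos R 0 = 1 := by
  rw [laurentCos, neg_zero, T_zero, ← two_smul R, invOf_smul_smul]

theorem laurentCos_neg (n : ℤ) : laurentCos R (-n) = laurentCos R n := by
  rw [laurentCos, laurentCos, neg_neg, add_comm]

theorem T_one_add_T_neg_one_mul_laurentCos (n : ℤ) :
    (T 1 + T (-1)) * laurentCos R n = laurentCos R (n + 1) + laurentCos R (n - 1) := by
  simp only [laurentCos, mul_smul_comm, ← smul_add, mul_add, add_mul, ← T_add]
  congr 1
  ring_nf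

theorem coeff_laurentCos (m n : ℕ) :
    (laurentCos R m).coeff n = if m = n then if n = 0 then 1 else ⅟2 else 0 := by
  have h_neg : -(m : ℤ) = n ↔ m = 0 ∧ n = 0 := by omega
  simp only [laurentCos, AddMonoidAlgebra.coeff_smul, AddMonoidAlgebra.coeff_add,
    Finsupp.smul_apply, Finsupp.add_apply, T_apply, Nat.cast_inj, h_neg, smul_eq_mul]
  have h_two : ⅟(2 : R) * (1 + 1) = 1 := by rw [one_add_one_eq_two, invOf_mul_self]
  split_ifs <;> grind

theorem linearIndependent_laurentCos : LinearIndependent R fun n : ℕ => laurentCos R n := by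
  rw [linearIndependent_iff']
  intro s g hg n hn
  have hcoeff : g n * (if n = 0 then 1 else ⅟2) = 0 := by
    simpa [AddMonoidAlgebra.coeff_sum, Finsupp.finsetSum_apply, coeff_laurentCos, hn] using
      congrArg (fun p : R[T;T⁻¹] => p.coeff n) hg
  split_ifs at hcoeff with h_zero
  · simpa using hcoeff
  · exact (isUnit_of_invertible (⅟2 : R)).mul_left_eq_zero.1 hcoeff

theorem mem_span_T_odd_of_negVar_eq_neg {p : R[T;T⁻¹]} {s : Set ℤ}
    (hp : p ∈ Submodule.span R (T '' s)) (hneg : negVar R p = -p) :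
    p ∈ Submodule.span R (T '' {n ∈ s | Odd n}) := by
  let oddPart : R[T;T⁻¹] →ₗ[R] R[T;T⁻¹] := ⅟(2 : R) • (LinearMap.id - (negVar R).toLinearMap)
  have hfix : oddPart p = p := by
    simp [oddPart, hneg]
  rw [← hfix, ← Submodule.mem_comap]
  refine Submodule.span_le.2 ?_ hp
  rintro _ ⟨n, hn, rfl⟩
  rcases Int.even_or_odd n with heven | hodd
  · simp [oddPart, negVar_T, Int.negOnePow_even n heven]
  · have : oddPart (T n) = T n := by
      simp [oddPart, negVar_T_of_odd hodd]
    rw [SetLike.mem_coe, Submodule.mem_comap, this]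
    exact Submodule.subset_span ⟨n, ⟨hn, hodd⟩, rfl⟩

theorem mem_span_laurentCos_of_invert_eq {p : R[T;T⁻¹]} {s : Set ℤ}
    (hp : p ∈ Submodule.span R (T '' s)) (hinv : invert p = p) :
    p ∈ Submodule.span R (laurentCos R '' s) := by
  let evenPart : R[T;T⁻¹] →ₗ[R] R[T;T⁻¹] := ⅟(2 : R) • (LinearMap.id + invert.toLinearMap)
  have hfix : evenPart p = p := by
    simp [evenPart, hinv]
  rw [← hfix, ← Submodule.mem_comap]
  refine Submodule.span_le.2 ?_ hp
  rintro _ ⟨n, hn, rfl⟩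
  have : evenPart (T n) = laurentCos R n := by
    simp [evenPart, laurentCos]
  rw [SetLike.mem_coe, Submodule.mem_comap, this]
  exact Submodule.subset_span ⟨n, hn, rfl⟩

/-- The Laurent polynomials `(z + z⁻¹) (z²ʲ + z⁻²ʲ) / 2` for `0 ≤ j ≤ N`, with respect to which the
reflection Hamiltonians are the coordinates of `2 t̂(z)`. -/
def hamiltonianBasis (R : Type*) [CommRing R] [Invertible (2 : R)] (N : ℕ) (j : Fin (N + 1)) :
    R[T;T⁻¹] :=
  (T 1 + T (-1)) * laurentCos R (2 * j)

theorem linearIndependent_hamiltonianBasis (N : ℕ) :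
    LinearIndependent R (hamiltonianBasis R N) := by
  have hcos : LinearIndependent R fun j : Fin (N + 1) => laurentCos R (2 * j) := by
    have hinj : Function.Injective fun j : Fin (N + 1) => 2 * (j : ℕ) := fun i j h => by
      simpa [Fin.ext_iff] using h
    simpa [Function.comp_def] using linearIndependent_laurentCos.comp _ hinj
  rw [Fintype.linearIndependent_iff] at hcos ⊢
  intro g hg
  refine hcos g ((mul_left_mem_nonZeroDivisors_eq_zero_iff
    T_one_add_T_neg_one_mem_nonZeroDivisors).1 ?_)
  simpa only [hamiltonianBasis, ← mul_smul_comm, ← Finset.mul_sum] using hg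

theorem laurentCos_odd_mem_span_hamiltonianBasis {N m : ℕ} (hm : m ≤ N) :
    laurentCos R (2 * m + 1) ∈ Submodule.span R (Set.range (hamiltonianBasis R N)) := by
  have hbasis (j : ℕ) (hj : j ≤ N) : (T 1 + T (-1)) * laurentCos R (2 * j) ∈
      Submodule.span R (Set.range (hamiltonianBasis R N)) :=
    Submodule.subset_span ⟨⟨j, Nat.lt_succ_of_le hj⟩, rfl⟩
  induction m with
  | zero =>
    have h := hbasis 0 hm
    rw [Nat.cast_zero, mul_zero, T_one_add_T_neg_one_mul_laurentCos, zero_add, zero_sub,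
      laurentCos_neg, ← two_smul R,
      Submodule.smul_mem_iff_of_isUnit _ (isUnit_of_invertible 2)] at h
    simpa using h
  | succ m ih =>
    have h := Submodule.sub_mem _ (hbasis (m + 1) hm) (ih (by omega))
    rw [T_one_add_T_neg_one_mul_laurentCos] at h
    convert h using 1
    push_cast
    ring_nf

theorem existsUnique_hamiltonianBasis_coordinates {N : ℕ} {p : R[T;T⁻¹]}
    (hp : p ∈ boundedDegree R (2 * N + 1)) (hinv : invert p = p) (hneg : negVar R p = -p) :
    ∃! P : Fin (N + 1) → R, ∑ j, P j • hamiltonianBasis R N j = p := by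
  have hspan : p ∈ Submodule.span R (Set.range (hamiltonianBasis R N)) := by
    refine Submodule.span_le.2 ?_
      (mem_span_laurentCos_of_invert_eq (mem_span_T_odd_of_negVar_eq_neg hp hneg) hinv)
    rintro _ ⟨n, ⟨⟨hn_lower, hn_upper⟩, m, rfl⟩, rfl⟩
    rcases m with m | m
    · exact laurentCos_odd_mem_span_hamiltonianBasis (by simpa using hn_upper)
    · have h_reflect : 2 * Int.negSucc m + 1 = -(2 * m + 1) := by omega
      rw [h_reflect, laurentCos_neg]
      exact laurentCos_odd_mem_span_hamiltonianBasis (by omega)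
  obtain ⟨P, hP⟩ := (Submodule.mem_span_range_iff_exists_fun R).1 hspan
  refine ⟨P, hP, fun Q hQ => ?_⟩
  exact (linearIndependent_iff_injective_fintypeLinearCombination.1
    (linearIndependent_hamiltonianBasis N)) (hQ.trans hP.symm)

end LaurentCosines

section Monodromy

variable {R : Type} [CommRing R]

/-- The Pauli matrix `σᶻ = diag(1, -1)`; conjugation by it implements `z ↦ -z` up to sign. -/
def pauliZ (A : Type*) [CommRing A] : Matrix (Fin 2) (Fin 2) A :=
  !![1, 0; 0, -1]

theorem pauliZ_mul_self {A : Type*} [CommRing A] : pauliZ A * pauliZ A = 1 := by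
  simp [pauliZ, Matrix.one_fin_two]

theorem pauliZ_mul_pauliZ_mul {A : Type*} [CommRing A] (M : Matrix (Fin 2) (Fin 2) A) :
    pauliZ A * (pauliZ A * M) = M := by
  rw [← mul_assoc, pauliZ_mul_self, one_mul]

theorem lax_swap (e f k kinv : R) (u v : R[T;T⁻¹]) :
    lax e f k kinv v u = -(lax e f k kinv u v).adjugate := by
  simp [lax, Matrix.adjugate_fin_two_of]

theorem lax_neg (e f k kinv : R) (u v : R[T;T⁻¹]) :
    lax e f k kinv (-u) (-v) = -(pauliZ _ * lax e f k kinv u v * pauliZ _) := by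
  simp [lax, pauliZ, neg_add_eq_sub]

theorem mapMatrix_lax (φ : R[T;T⁻¹] →ₐ[R] R[T;T⁻¹]) (e f k kinv : R) (u v : R[T;T⁻¹]) :
    φ.mapMatrix (lax e f k kinv u v) = lax e f k kinv (φ u) (φ v) := by
  ext i j : 2
  fin_cases i <;> fin_cases j <;> simp [lax, algHom_C]

theorem lax_apply_mem {S : Submodule R R[T;T⁻¹]} {u v : R[T;T⁻¹]} (h_one : 1 ∈ S) (hu : u ∈ S)
    (hv : v ∈ S) (e f k kinv : R) (i j : Fin 2) : lax e f k kinv u v i j ∈ S := by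
  have hC (r : R) : C r ∈ S := mul_one (C r) ▸ C_mul_mem h_one r
  fin_cases i <;> fin_cases j <;> simp [lax, mul_comm _ (C _), hC, C_mul_mem, hu, hv, sub_mem]

variable [Algebra ℂ R]

theorem refK_swap (ξ : ℂ) (u v : R[T;T⁻¹]) : refK ξ v u = (refK ξ u v).adjugate := by
  simp [refK, Matrix.adjugate_fin_two_of]

theorem refK_neg (ξ : ℂ) (u v : R[T;T⁻¹]) :
    refK ξ (-u) (-v) = -(pauliZ _ * refK ξ u v * pauliZ _) := by
  simp [refK, pauliZ, neg_add_eq_sub]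

theorem mapMatrix_refK (φ : R[T;T⁻¹] →ₐ[R] R[T;T⁻¹]) (ξ : ℂ) (u v : R[T;T⁻¹]) :
    φ.mapMatrix (refK ξ u v) = refK ξ (φ u) (φ v) := by
  ext i j : 2
  fin_cases i <;> fin_cases j <;> simp [refK, algHom_C]

theorem refK_apply_mem {S : Submodule R R[T;T⁻¹]} {u v : R[T;T⁻¹]} (hu : u ∈ S) (hv : v ∈ S)
    (ξ : ℂ) (i j : Fin 2) : refK ξ u v i j ∈ S := by
  fin_cases i <;> fin_cases j <;>
    simp [refK, C_mul_mem, hu, hv, sub_mem]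

theorem thatGen_zero (e f k kinv : Fin 0 → R) (ξ : ℂ) (a : Fin 0 → ℂ) (u v : R[T;T⁻¹]) :
    thatGen 0 e f k kinv ξ a u v = refK ξ u v := by
  simp [thatGen]

theorem thatGen_succ {N : ℕ} (e f k kinv : Fin (N + 1) → R) (ξ : ℂ) (a : Fin (N + 1) → ℂ)
    (u v : R[T;T⁻¹]) :
    thatGen (N + 1) e f k kinv ξ a u v =
      lax (e 0) (f 0) (k 0) (kinv 0) (algebraMap ℂ R[T;T⁻¹] (a 0) * u)
          (algebraMap ℂ R[T;T⁻¹] (a 0)⁻¹ * v) *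
        thatGen N (Fin.tail e) (Fin.tail f) (Fin.tail k) (Fin.tail kinv) ξ (Fin.tail a) u v *
        lax (e 0) (f 0) (k 0) (kinv 0) (algebraMap ℂ R[T;T⁻¹] (a 0)⁻¹ * u)
          (algebraMap ℂ R[T;T⁻¹] (a 0) * v) := by
  simp only [thatGen, List.ofFn_succ, List.prod_cons, List.reverse_cons, List.prod_append,
    List.prod_nil, mul_one, mul_assoc, Fin.tail]

theorem thatGen_swap {N : ℕ} (e f k kinv : Fin N → R) (ξ : ℂ) (a : Fin N → ℂ) (u v : R[T;T⁻¹]) :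
    thatGen N e f k kinv ξ a v u = (thatGen N e f k kinv ξ a u v).adjugate := by
  induction N with
  | zero => rw [thatGen_zero, thatGen_zero, refK_swap]
  | succ N ih =>
    rw [thatGen_succ, thatGen_succ, ih, lax_swap _ _ _ _ _ (_ * v), lax_swap _ _ _ _ _ (_ * v),
      Matrix.adjugate_mul_distrib, Matrix.adjugate_mul_distrib]
    simp only [neg_mul, mul_neg, neg_neg, mul_assoc]

theorem thatGen_neg {N : ℕ} (e f k kinv : Fin N → R) (ξ : ℂ) (a : Fin N → ℂ) (u v : R[T;T⁻¹]) :
    thatGen N e f k kinv ξ a (-u) (-v) =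
      -(pauliZ _ * thatGen N e f k kinv ξ a u v * pauliZ _) := by
  induction N with
  | zero => rw [thatGen_zero, thatGen_zero, refK_neg]
  | succ N ih =>
    simp only [thatGen_succ, ih, mul_neg, lax_neg, neg_mul, neg_neg, mul_assoc,
      pauliZ_mul_pauliZ_mul]

theorem mapMatrix_thatGen (φ : R[T;T⁻¹] →ₐ[R] R[T;T⁻¹]) {N : ℕ} (e f k kinv : Fin N → R) (ξ : ℂ)
    (a : Fin N → ℂ) (u v : R[T;T⁻¹]) :
    φ.mapMatrix (thatGen N e f k kinv ξ a u v) = thatGen N e f k kinv ξ a (φ u) (φ v) := by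
  induction N with
  | zero => rw [thatGen_zero, thatGen_zero, mapMatrix_refK]
  | succ N ih =>
    simp only [thatGen_succ, map_mul, mapMatrix_lax, ih, LaurentPolynomial.algebraMap_apply,
      algHom_C]

theorem thatGen_apply_mem_boundedDegree {N : ℕ} (e f k kinv : Fin N → R) (ξ : ℂ) (a : Fin N → ℂ)
    (i j : Fin 2) :
    thatGen N e f k kinv ξ a (T 1) (T (-1)) i j ∈ boundedDegree R (2 * N + 1) := by
  have hz : (T 1 : R[T;T⁻¹]) ∈ boundedDegree R 1 := T_mem_boundedDegree (by simp)
  have hzinv : (T (-1) : R[T;T⁻¹]) ∈ boundedDegree R 1 := T_mem_boundedDegree (by simp)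
  have h_one : (1 : R[T;T⁻¹]) ∈ boundedDegree R 1 := T_zero (R := R) ▸ T_mem_boundedDegree (by simp)
  induction N generalizing i j with
  | zero => simpa [thatGen_zero] using refK_apply_mem hz hzinv ξ i j
  | succ N ih =>
    have hlax (b c : ℂ) := lax_apply_mem h_one (C_mul_mem hz (algebraMap ℂ R b))
      (C_mul_mem hzinv (algebraMap ℂ R c)) (e 0) (f 0) (k 0) (kinv 0)
    rw [thatGen_succ,
      show (2 * (N + 1 : ℕ) + 1 : ℤ) = 1 + (2 * N + 1) + 1 by push_cast; ring]
    exact matrix_mul_apply_mem_boundedDegree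
      (matrix_mul_apply_mem_boundedDegree (hlax _ _) (ih _ _ _ _ _)) (hlax _ _) i j

theorem trace_thatGen_swap {N : ℕ} (e f k kinv : Fin N → R) (ξ : ℂ) (a : Fin N → ℂ)
    (u v : R[T;T⁻¹]) :
    (thatGen N e f k kinv ξ a v u).trace = (thatGen N e f k kinv ξ a u v).trace := by
  rw [thatGen_swap, Matrix.adjugate_fin_two, Matrix.trace_fin_two_of, Matrix.trace_fin_two,
    add_comm]

theorem trace_thatGen_neg {N : ℕ} (e f k kinv : Fin N → R) (ξ : ℂ) (a : Fin N → ℂ)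
    (u v : R[T;T⁻¹]) :
    (thatGen N e f k kinv ξ a (-u) (-v)).trace = -(thatGen N e f k kinv ξ a u v).trace := by
  rw [thatGen_neg, Matrix.trace_neg, Matrix.trace_mul_comm, pauliZ_mul_pauliZ_mul]

theorem map_trace_thatGen (φ : R[T;T⁻¹] →ₐ[R] R[T;T⁻¹]) {N : ℕ} (e f k kinv : Fin N → R) (ξ : ℂ)
    (a : Fin N → ℂ) (u v : R[T;T⁻¹]) :
    φ (thatGen N e f k kinv ξ a u v).trace = (thatGen N e f k kinv ξ a (φ u) (φ v)).trace := by
  rw [← mapMatrix_thatGen]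
  exact AddMonoidHom.map_trace φ _

theorem isReflectionHamiltonians_iff [Invertible (2 : R)] {N : ℕ} (e f k kinv : Fin N → R) (ξ : ℂ)
    (a : Fin N → ℂ) (P : Fin (N + 1) → R) :
    IsReflectionHamiltonians N e f k kinv ξ a P ↔
      ∑ j, P j • hamiltonianBasis R N j = (That N e f k kinv ξ a).trace := by
  have hhalf (p : R[T;T⁻¹]) : (2 : ℂ)⁻¹ • p = ⅟(2 : R) • p := by
    rw [inv_smul_eq_iff₀ two_ne_zero, ofNat_smul_eq_nsmul ℂ, ← ofNat_smul_eq_nsmul R,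
      smul_invOf_smul]
  have hexpand : ∑ j, P j • hamiltonianBasis R N j = (T 1 + T (-1)) * (C (P 0) +
      ∑ j : Fin N, C (P j.succ) * laurentCos R (2 * (j.1 + 1))) := by
    simp [hamiltonianBasis, Fin.sum_univ_succ, laurentCos_zero, smul_eq_C_mul, mul_add,
      Finset.mul_sum, mul_left_comm]
  rw [hexpand, IsReflectionHamiltonians, tHat, smul_inv_smul₀ two_ne_zero, eq_comm]
  simp only [hhalf, laurentCos]

end Monodromy

/-- `t̂(z) = (1/2)(Â(z) + D̂(z))` satisfies `t̂(z⁻¹) = t̂(z)`, `t̂(−z) = −t̂(z)`,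
and there exist unique reflection Hamiltonians `P₀, …, P_N ∈ R` with
`2·t̂(z) = (z + z⁻¹)·(P₀ + Σ_{j=1}^{N} P_j·(z^{2j} + z^{−2j})/2)`. -/
theorem transfer_matrix_expansion (R : Type) [CommRing R] [Algebra ℂ R]
    (N : ℕ) (hN : 1 ≤ N) (e f k kinv : Fin N → R) (hk : ∀ i, k i * kinv i = 1)
    (ξ : ℂ) (hξ : ξ ≠ 0) (a : Fin N → ℂ) (ha : ∀ i, a i ≠ 0) :
    tHatGen N e f k kinv ξ a (T (-1)) (T 1) = tHatGen N e f k kinv ξ a (T 1) (T (-1)) ∧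
    tHatGen N e f k kinv ξ a (-(T 1)) (-(T (-1)))
      = -(tHatGen N e f k kinv ξ a (T 1) (T (-1))) ∧
    ∃! Pv : Fin (N + 1) → R, IsReflectionHamiltonians N e f k kinv ξ a Pv := by
  have h_swap := trace_thatGen_swap e f k kinv ξ a
  have h_neg := trace_thatGen_neg e f k kinv ξ a
  refine ⟨by rw [tHatGen, h_swap, tHatGen], by rw [tHatGen, h_neg, smul_neg, tHatGen], ?_⟩
  let : Invertible (2 : R) := (Invertible.map (algebraMap ℂ R) 2).copy 2 (map_ofNat _ 2).symm
  simp only [isReflectionHamiltonians_iff]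
  refine existsUnique_hamiltonianBasis_coordinates ?_ ?_ ?_
  · exact Submodule.sum_mem _ fun i _ => thatGen_apply_mem_boundedDegree e f k kinv ξ a i i
  · have h_map := map_trace_thatGen (invert (R := R)).toAlgHom e f k kinv ξ a (T 1) (T (-1))
    simpa [That, h_swap (T 1)] using h_map
  · have h_map := map_trace_thatGen (negVar R) e f k kinv ξ a (T 1) (T (-1))
    rwa [negVar_T_of_odd odd_one, negVar_T_of_odd odd_neg_one, h_neg] at h_map

end
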